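/- Let G be a finite simple graph on vertex set V equipped with a linear order, let w : V → ℝ≥0 be a weight function, let x ≥ 0 be a real number, and let S ⊆ V be a set such that every vertex v ∈ S has fewer than x neighbors u ∈ S with u preceding v in the order. Then there exists a subset I ⊆ S that is an independent set of G and satisfies ∑_{v∈I} w(v) ≥ (∑_{v∈S} w(v)) / ⌊x+1⌋. -/

import Mathlib

/-- Greedy colouring: if every vertex of `S` has fewer than `k` earlier neighbours in `S`, then
`G` restricted to `S` is properly coloured by the naturals below `k`. -/
theorem exists_greedy_coloring {V : Type*} [LinearOrder V]
    (G : SimpleGraph V) [DecidableRel G.Adj] (k : ℕ) (S : Finset V)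
    (hS : ∀ v ∈ S, (S.filter fun u => u < v ∧ G.Adj u v).card < k) :
    ∃ c : V → ℕ, (∀ v ∈ S, c v ∈ Finset.range k) ∧
      ∀ u ∈ S, ∀ v ∈ S, G.Adj u v → c u ≠ c v := by
  induction S using Finset.induction_on_max with
  | empty => exact ⟨fun _ => 0, by simp⟩
  | insert a s ha ih =>
    obtain ⟨c, hck, hc⟩ := ih fun v hv =>
      (Finset.card_le_card (Finset.filter_subset_filter _ (Finset.subset_insert a s))).trans_lt
        (hS v (Finset.mem_insert_of_mem hv))
    have hcard : (((insert a s).filter fun u => u < a ∧ G.Adj u a).image c).card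
        < (Finset.range k).card := by
      rw [Finset.card_range]
      exact Finset.card_image_le.trans_lt (hS a (Finset.mem_insert_self a s))
    obtain ⟨i, hik, hi⟩ := Finset.exists_mem_notMem_of_card_lt_card hcard
    have hia : ∀ u ∈ s, G.Adj u a → c u ≠ i := fun u hu hadj h =>
      hi (Finset.mem_image.2
        ⟨u, Finset.mem_filter.2 ⟨Finset.mem_insert_of_mem hu, ha u hu, hadj⟩, h⟩)
    have hne : ∀ u ∈ s, u ≠ a := fun u hu => (ha u hu).ne
    refine ⟨Function.update c a i, fun v hv => ?_, fun u hu v hv hadj => ?_⟩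
    · rcases Finset.mem_insert.1 hv with rfl | hv
      · simpa using hik
      · simpa [Function.update_of_ne (hne v hv)] using hck v hv
    · rcases Finset.mem_insert.1 hu with rfl | hus <;>
        rcases Finset.mem_insert.1 hv with rfl | hvs
      · exact absurd hadj (G.loopless.irrefl _)
      · simpa [Function.update_of_ne (hne v hvs)] using (hia v hvs hadj.symm).symm
      · simpa [Function.update_of_ne (hne u hus)] using hia u hus hadj
      · simpa [Function.update_of_ne (hne u hus), Function.update_of_ne (hne v hvs)]
          using hc u hus v hvs hadj

theorem exists_heavy_independent_subset {V : Type*} [Fintype V] [LinearOrder V]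
    (G : SimpleGraph V) [DecidableRel G.Adj]
    (w : V → ℝ) (hw0 : ∀ v, 0 ≤ w v)
    (x : ℝ) (hx : 0 ≤ x) (S : Finset V)
    (hS : ∀ v ∈ S, ((S.filter fun u => u < v ∧ G.Adj u v).card : ℝ) < x) :
    ∃ I ⊆ S, (∀ u ∈ I, ∀ v ∈ I, ¬ G.Adj u v) ∧
      (∑ v ∈ S, w v) / (⌊x + 1⌋₊ : ℝ) ≤ ∑ v ∈ I, w v := by
  have hfloor : ⌊x + 1⌋₊ = ⌊x⌋₊ + 1 := Nat.floor_add_one hx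
  have hpos : (0 : ℝ) < (⌊x + 1⌋₊ : ℝ) := by rw [hfloor]; positivity
  obtain ⟨c, hck, hc⟩ := exists_greedy_coloring G ⌊x + 1⌋₊ S fun v hv => by
    rw [hfloor, Nat.lt_succ_iff]
    exact Nat.le_floor (hS v hv).le
  obtain ⟨i, -, hi⟩ := Finset.exists_le_sum_fiber_of_maps_to_of_nsmul_le_sum
    (w := w) (b := (∑ v ∈ S, w v) / (⌊x + 1⌋₊ : ℝ)) hck
    (Finset.nonempty_range_iff.2 (by omega))
    (by rw [Finset.card_range, nsmul_eq_mul, mul_div_cancel₀ _ hpos.ne'])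
  refine ⟨S.filter fun v => c v = i, Finset.filter_subset _ _, fun u hu v hv hadj => ?_, hi⟩
  rw [Finset.mem_filter] at hu hv
  exact hc u hu.1 v hv.1 hadj (hu.2.trans hv.2.symm)
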